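/- Let Γ = (A, R) be an AFRA. The union of two ideal sets of Γ is an ideal set; consequently, any two maximal (w.r.t. set inclusion) ideal sets of Γ coincide, i.e. the ideal extension is unique. -/

import Mathlib

/-!
The union of two admissible sets inherits acceptability of its elements, because acceptability is
monotone in the defending set; only conflict-freeness can fail. By Zorn's lemma there is a preferred
extension (`AFRA.exists_preferred`). It contains both ideal sets, hence their union, and is
conflict-free, so the union is conflict-free as well. Any two maximal ideal sets then both equal
their union.
-/

/-- An Argumentation Framework with Recursive Attacks: a set (type) of
arguments, a set (type) of attacks, each attack having a source argument
and a target which is either an argument or an attack. -/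
structure AFRA where
  Arg : Type
  Att : Type
  src : Att → Arg
  trg : Att → Arg ⊕ Att

namespace AFRA

/-- The elements of an AFRA: arguments and attacks. -/
abbrev El (Γ : AFRA) : Type := Γ.Arg ⊕ Γ.Att

variable (Γ : AFRA)

/-- An attack `α` defeats `V` iff `V = trg α` (direct defeat) or `V` is an
attack whose source is `trg α` (indirect defeat). -/
def Defeats (α : Γ.Att) (V : Γ.El) : Prop :=
  V = Γ.trg α ∨ ∃ β : Γ.Att, V = Sum.inr β ∧ Γ.trg α = Sum.inl (Γ.src β)

/-- `W` is acceptable w.r.t. `S` iff every attack defeating `W` is defeated by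
some attack in `S`. -/
def Acceptable (S : Set Γ.El) (W : Γ.El) : Prop :=
  ∀ α : Γ.Att, Γ.Defeats α W → ∃ β : Γ.Att, Sum.inr β ∈ S ∧ Γ.Defeats β (Sum.inr α)

/-- `S` is conflict-free iff no element of `S` defeats another element of `S`. -/
def ConflictFree (S : Set Γ.El) : Prop :=
  ¬ ∃ α : Γ.Att, Sum.inr α ∈ S ∧ ∃ W ∈ S, Γ.Defeats α W

/-- The characteristic function of an AFRA. -/
def charFun (S : Set Γ.El) : Set Γ.El := {V | Γ.Acceptable S V}

/-- `S` is admissible iff it is conflict-free and all its elements are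
acceptable w.r.t. `S`. -/
def Admissible (S : Set Γ.El) : Prop :=
  Γ.ConflictFree S ∧ ∀ V ∈ S, Γ.Acceptable S V

/-- `S` is a complete extension iff it is admissible and contains every
element acceptable w.r.t. it. -/
def Complete (S : Set Γ.El) : Prop :=
  Γ.Admissible S ∧ ∀ V : Γ.El, Γ.Acceptable S V → V ∈ S

/-- `S` is a preferred extension iff it is a maximal admissible set. -/
def Preferred (S : Set Γ.El) : Prop :=
  Γ.Admissible S ∧ ∀ T : Set Γ.El, Γ.Admissible T → S ⊆ T → S = T

/-- `S` is a stable extension iff it is conflict-free and defeats every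
element outside of it. -/
def Stable (S : Set Γ.El) : Prop :=
  Γ.ConflictFree S ∧ ∀ V : Γ.El, V ∉ S → ∃ α : Γ.Att, Sum.inr α ∈ S ∧ Γ.Defeats α V

/-- The range of `S`: `S` together with everything defeated by `S`. -/
def range (S : Set Γ.El) : Set Γ.El :=
  S ∪ {V : Γ.El | ∃ α : Γ.Att, Sum.inr α ∈ S ∧ Γ.Defeats α V}

/-- `S` is a semi-stable extension iff it is a complete extension with
maximal range among complete extensions. -/
def SemiStable (S : Set Γ.El) : Prop :=
  Γ.Complete S ∧ ∀ T : Set Γ.El, Γ.Complete T → Γ.range S ⊆ Γ.range T → Γ.range T = Γ.range S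

/-- `S` is ideal iff it is admissible and contained in every preferred
extension. -/
def Ideal (S : Set Γ.El) : Prop :=
  Γ.Admissible S ∧ ∀ P : Set Γ.El, Γ.Preferred P → S ⊆ P

/-- An AFRA is an AF when every attack targets an argument. -/
def IsAF : Prop := ∀ α : Γ.Att, ∃ a : Γ.Arg, Γ.trg α = Sum.inl a

/-- The Dung attack relation between arguments. -/
def AttacksAF (a b : Γ.Arg) : Prop :=
  ∃ α : Γ.Att, Γ.src α = a ∧ Γ.trg α = Sum.inl b

/-- D-conflict-freeness of a set of arguments. -/
def DConflictFree (U : Set Γ.Arg) : Prop :=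
  ¬ ∃ a ∈ U, ∃ b ∈ U, Γ.AttacksAF a b

/-- D-acceptability of an argument w.r.t. a set of arguments. -/
def DAcceptable (U : Set Γ.Arg) (a : Γ.Arg) : Prop :=
  ∀ b : Γ.Arg, Γ.AttacksAF b a → ∃ c ∈ U, Γ.AttacksAF c b

/-- The D-characteristic function on sets of arguments. -/
def dCharFun (U : Set Γ.Arg) : Set Γ.Arg := {a | Γ.DAcceptable U a}

/-- D-admissibility of a set of arguments. -/
def DAdmissible (U : Set Γ.Arg) : Prop :=
  Γ.DConflictFree U ∧ ∀ a ∈ U, Γ.DAcceptable U a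

/-- D-complete extensions. -/
def DComplete (U : Set Γ.Arg) : Prop :=
  Γ.DAdmissible U ∧ ∀ a : Γ.Arg, Γ.DAcceptable U a → a ∈ U

/-- D-preferred extensions: maximal D-admissible sets. -/
def DPreferred (U : Set Γ.Arg) : Prop :=
  Γ.DAdmissible U ∧ ∀ W : Set Γ.Arg, Γ.DAdmissible W → U ⊆ W → U = W

/-- The operator completing a set of arguments with all attacks arising
from it. -/
def Ext (U : Set Γ.Arg) : Set Γ.El :=
  (Sum.inl '' U) ∪ (Sum.inr '' {α : Γ.Att | Γ.src α ∈ U})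

end AFRA

namespace AFRA

theorem Acceptable.mono {Γ : AFRA} {S T : Set Γ.El} {W : Γ.El} (h : Γ.Acceptable S W)
    (hST : S ⊆ T) : Γ.Acceptable T W := fun α hα =>
  let ⟨β, hβ, hd⟩ := h α hα
  ⟨β, hST hβ, hd⟩

theorem ConflictFree.subset {Γ : AFRA} {S T : Set Γ.El} (h : Γ.ConflictFree T) (hST : S ⊆ T) :
    Γ.ConflictFree S := fun ⟨α, hα, W, hW, hd⟩ => h ⟨α, hST hα, W, hST hW, hd⟩

/-- The union of a chain of admissible sets is admissible: a conflict involves only two elements,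
which lie together in a single member of the chain. -/
theorem admissible_sUnion {Γ : AFRA} {c : Set (Set Γ.El)} (hc : ∀ S ∈ c, Γ.Admissible S)
    (hchain : IsChain (· ⊆ ·) c) : Γ.Admissible (⋃₀ c) := by
  constructor
  · rintro ⟨α, ⟨S, hS, hα⟩, W, ⟨T, hT, hW⟩, hd⟩
    rcases hchain.total hS hT with h | h
    · exact (hc T hT).1 ⟨α, h hα, W, hW, hd⟩
    · exact (hc S hS).1 ⟨α, hα, W, h hW, hd⟩
  · rintro V ⟨S, hS, hV⟩
    exact ((hc S hS).2 V hV).mono (Set.subset_sUnion_of_mem hS)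

theorem exists_preferred (Γ : AFRA) : ∃ P : Set Γ.El, Γ.Preferred P := by
  obtain ⟨P, hP⟩ := zorn_subset {S : Set Γ.El | Γ.Admissible S} fun c hc hchain =>
    ⟨⋃₀ c, admissible_sUnion hc hchain, fun _ => Set.subset_sUnion_of_mem⟩
  exact ⟨P, hP.prop, fun _ hT h => hP.eq_of_subset hT h⟩

theorem Ideal.union {Γ : AFRA} {S T : Set Γ.El} (hS : Γ.Ideal S) (hT : Γ.Ideal T) :
    Γ.Ideal (S ∪ T) := by
  have hsub : ∀ P : Set Γ.El, Γ.Preferred P → S ∪ T ⊆ P := fun P hP =>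
    Set.union_subset (hS.2 P hP) (hT.2 P hP)
  obtain ⟨P, hP⟩ := Γ.exists_preferred
  refine ⟨⟨hP.1.1.subset (hsub P hP), ?_⟩, hsub⟩
  rintro V (hV | hV)
  · exact (hS.1.2 V hV).mono Set.subset_union_left
  · exact (hT.1.2 V hV).mono Set.subset_union_right

end AFRA

/-- The union of two ideal sets is ideal; consequently any two maximal ideal
sets coincide (the ideal extension is unique). -/
theorem stmt_13 (Γ : AFRA) :
    (∀ S T : Set Γ.El, Γ.Ideal S → Γ.Ideal T → Γ.Ideal (S ∪ T)) ∧
    (∀ S T : Set Γ.El,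
      (Γ.Ideal S ∧ ∀ W : Set Γ.El, Γ.Ideal W → S ⊆ W → S = W) →
      (Γ.Ideal T ∧ ∀ W : Set Γ.El, Γ.Ideal W → T ⊆ W → T = W) →
      S = T) := by
  refine ⟨fun S T hS hT => hS.union hT, fun S T hS hT => ?_⟩
  have hU := hS.1.union hT.1
  exact (hS.2 _ hU Set.subset_union_left).trans (hT.2 _ hU Set.subset_union_right).symm
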